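/- arXiv:1304.0114 — 2 statements merged into one kernel-verified Lean document; each statement's English description precedes it below -/
import Mathlib

section
/- Let 𝔤 be a finite dimensional simple Lie algebra over k. Then the universal enveloping algebra of the loop algebra 𝔤 ⊗_k k[t, t⁻¹] (the Lie algebra with underlying vector space 𝔤 ⊗_k k[t,t⁻¹] and bracket [a ⊗ p, b ⊗ q] = [a,b] ⊗ pq) is neither left noetherian nor right noetherian. -/
/-!
Statement 16: Let 𝔤 be a finite dimensional simple Lie algebra over a field k of
characteristic 0.  Then the universal enveloping algebra of the loop algebra
𝔤 ⊗ₖ k[t,t⁻¹] (with bracket [a⊗p, b⊗q] = [a,b] ⊗ pq) is neither left nor right noetherian.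

The loop algebra is realized as the base change `k[t,t⁻¹] ⊗[k] 𝔤`, whose Mathlib bracket
satisfies `[p ⊗ a, q ⊗ b] = pq ⊗ [a,b]`, viewed as a Lie algebra over `k`.
-/

noncomputable section

open scoped TensorProduct

variable (k 𝔤 : Type*) [Field k] [CharZero k] [LieRing 𝔤] [LieAlgebra k 𝔤]

/-- The loop algebra `𝔤 ⊗ₖ k[t,t⁻¹]`, realized as `k[t,t⁻¹] ⊗[k] 𝔤`. -/
abbrev loopAlgebra := LaurentPolynomial k ⊗[k] 𝔤

/-- The loop algebra is a Lie algebra over `k` (by restriction of scalars from `k[t,t⁻¹]`). -/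
instance loopAlgebra.instLieAlgebra : LieAlgebra k (loopAlgebra k 𝔤) where
  lie_smul c x y := by
    rw [← algebraMap_smul (LaurentPolynomial k) c y,
      ← algebraMap_smul (LaurentPolynomial k) c ⁅x, y⁆]
    exact LieAlgebra.lie_smul _ _ _

/-!
Tensoring representations adds the eigenvalues on common eigenvectors.  So if `x` has a nonzero
eigenvalue `μ` in a representation of `L`, the tensor product of its evaluations at all `N`-th roots
of unity contains a nonzero vector that every `t ^ d ⊗ x` with `N ∤ d` kills, while `t ^ N ⊗ x`
scales it by `N * μ`.  Take `N = c ^ n` with `c > 1` invertible in the field: the annihilator of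
this vector shows that `t ^ (c ^ n) ⊗ x` is not in the left ideal generated by the
`t ^ (c ^ j) ⊗ x` with `j < n`.  An element `x` with `μ ≠ 0` exists by Engel's theorem if `L` is not
nilpotent, and through a one-dimensional representation otherwise.  The principal
anti-automorphism exchanges left and right ideals.
-/

theorem not_isNoetherian_of_forall_exists_submodule {R M : Type*} [Semiring R] [AddCommMonoid M]
    [Module R M] (u : ℕ → M)
    (h : ∀ n, ∃ N : Submodule R M, (∀ j < n, u j ∈ N) ∧ u n ∉ N) : ¬ IsNoetherian R M := by
  intro _
  refine not_strictMono_of_wellFoundedGT (fun n ↦ Submodule.span R (u '' Set.Iio n))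
    (strictMono_nat_of_lt_succ fun n ↦ ?_)
  obtain ⟨N, hN, hn⟩ := h n
  have hle : Submodule.span R (u '' Set.Iio n) ≤ N :=
    Submodule.span_le.mpr (Set.image_subset_iff.mpr hN)
  refine SetLike.lt_iff_le_and_exists.mpr ⟨by gcongr; simp, u n, ?_, fun hmem ↦ hn (hle hmem)⟩
  exact Submodule.subset_span ⟨n, n.lt_succ_self, rfl⟩

theorem exists_hasEigenvalue_ne_zero_of_not_isNilpotent {K V : Type*} [Field K] [IsAlgClosed K]
    [AddCommGroup V] [Module K V] [FiniteDimensional K V] {f : Module.End K V}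
    (hf : ¬ IsNilpotent f) : ∃ μ ≠ 0, f.HasEigenvalue μ := by
  contrapose! hf
  have hroots : f.charpoly.roots = Multiset.replicate (Module.finrank K V) 0 := by
    refine Multiset.eq_replicate.mpr ⟨?_, fun μ hμ ↦ ?_⟩
    · rw [← (IsAlgClosed.splits _).natDegree_eq_card_roots, f.charpoly_natDegree]
    · by_contra hne
      exact hf μ hne ((f.hasEigenvalue_iff_isRoot_charpoly μ).mpr
        (Polynomial.isRoot_of_mem_roots hμ))
  rw [f.isNilpotent_iff_charpoly,
    (IsAlgClosed.splits _).eq_prod_roots_of_monic f.charpoly_monic, hroots]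
  simp

theorem sum_range_pow_pow_of_isPrimitiveRoot {K : Type*} [CommRing K] [IsDomain K] {ζ : K} {n : ℕ}
    (hζ : IsPrimitiveRoot ζ n) (d : ℕ) :
    ∑ i ∈ Finset.range n, (ζ ^ i) ^ d = if n ∣ d then (n : K) else 0 := by
  simp_rw [pow_right_comm ζ _ d]
  split_ifs with hd
  · simp [(hζ.pow_eq_one_iff_dvd d).mpr hd]
  · have hne : ζ ^ d - 1 ≠ 0 := sub_ne_zero.mpr ((hζ.pow_eq_one_iff_dvd d).not.mpr hd)
    refine (mul_eq_zero.mp ?_).resolve_right hne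
    rw [geom_sum_mul, pow_right_comm, hζ.pow_eq_one, one_pow, sub_self]

theorem exists_one_lt_natCast_ne_zero (R : Type*) [AddMonoidWithOne R] [NeZero (1 : R)] :
    ∃ c : ℕ, 1 < c ∧ (c : R) ≠ 0 := by
  by_contra! h
  have h3 : ((2 + 1 : ℕ) : R) = 0 := h 3 (by norm_num)
  rw [Nat.cast_succ, h 2 one_lt_two, zero_add] at h3
  exact one_ne_zero h3

theorem tmul_ne_zero {R M N : Type*} [CommRing R] [IsDomain R] [AddCommGroup M] [Module R M]
    [Module.IsTorsionFree R M] [AddCommGroup N] [Module R N] [Module.IsTorsionFree R N] {m : M}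
    {n : N} (hm : m ≠ 0) (hn : n ≠ 0) : m ⊗ₜ[R] n ≠ 0 := by
  have hM : LinearIndependent R (fun _ : Unit ↦ m) := LinearIndependent.of_subsingleton () hm
  have hN : LinearIndependent R (fun _ : Unit ↦ n) := LinearIndependent.of_subsingleton () hn
  exact (hM.tmul_of_isDomain hN).ne_zero ((), ())

/-- Evaluation of Laurent polynomials at a unit, as an algebra homomorphism. -/
def laurentAeval (R : Type*) {S : Type*} [CommSemiring R] [CommSemiring S] [Algebra R S] (a : Sˣ) :
    LaurentPolynomial R →ₐ[R] S where
  toRingHom := LaurentPolynomial.eval₂ (algebraMap R S) a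
  commutes' := LaurentPolynomial.eval₂_C _ a

theorem laurentAeval_T (R : Type*) {S : Type*} [CommSemiring R] [CommSemiring S] [Algebra R S]
    (a : Sˣ) (n : ℤ) : laurentAeval R a (LaurentPolynomial.T n) = (a ^ n : Sˣ) :=
  LaurentPolynomial.eval₂_T _ a n

section AssociativeLieRing

attribute [local instance] LieRing.ofAssociativeRing

section EnvelopingAlgebra

open UniversalEnvelopingAlgebra

variable (R L : Type*) [CommRing R] [LieRing L] [LieAlgebra R L]

/-- The principal anti-automorphism of an enveloping algebra, which sends `x : L` to `-x`, as an
algebra homomorphism to the opposite algebra. -/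
def envelopingAntipode : UniversalEnvelopingAlgebra R L →ₐ[R] (UniversalEnvelopingAlgebra R L)ᵐᵒᵖ :=
  lift R
    { toLinearMap := (MulOpposite.opLinearEquiv R).toLinearMap ∘ₗ
        (-(ι R : L →ₗ⁅R⁆ UniversalEnvelopingAlgebra R L).toLinearMap)
      map_lie' := fun {x y} ↦ MulOpposite.unop_injective <| by
        simp [LieRing.of_associative_ring_bracket, -ι_apply] }

theorem envelopingAntipode_ι (x : L) : envelopingAntipode R L (ι R x) = MulOpposite.op (-ι R x) :=
  lift_ι_apply R _ x

theorem unop_envelopingAntipode_unop_envelopingAntipode (u : UniversalEnvelopingAlgebra R L) :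
    (envelopingAntipode R L (envelopingAntipode R L u).unop).unop = u := by
  have hid : (AlgHom.opComm (envelopingAntipode R L)).comp (envelopingAntipode R L) =
      AlgHom.id R _ := by
    ext x
    simp [envelopingAntipode_ι, -ι_apply]
  exact DFunLike.congr_fun hid u

/-- The principal anti-automorphism as an isomorphism of an enveloping algebra with its opposite,
used to pass between left and right ideals. -/
def envelopingOpEquiv :
    UniversalEnvelopingAlgebra R L ≃ₐ[R] (UniversalEnvelopingAlgebra R L)ᵐᵒᵖ :=
  AlgEquiv.ofAlgHom (envelopingAntipode R L) (AlgHom.opComm (envelopingAntipode R L))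
    (AlgHom.ext fun u ↦ MulOpposite.unop_injective
      (unop_envelopingAntipode_unop_envelopingAntipode R L u.unop))
    (AlgHom.ext (unop_envelopingAntipode_unop_envelopingAntipode R L))

end EnvelopingAlgebra

section TensorRep

variable {R K L M N : Type*} [CommRing R] [CommRing K] [Algebra R K] [LieRing L] [LieAlgebra R L]
  [AddCommGroup M] [Module K M] [Module R M] [IsScalarTower R K M]
  [AddCommGroup N] [Module K N] [Module R N] [IsScalarTower R K N]

/-- The tensor product over `K` of two representations on `K`-modules of a Lie algebra defined over
a smaller ring `R`. -/
def tensorRep (ρ : L →ₗ⁅R⁆ Module.End K M) (σ : L →ₗ⁅R⁆ Module.End K N) :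
    L →ₗ⁅R⁆ Module.End K (M ⊗[K] N) where
  toLinearMap :=
    (LinearMap.rTensorHom N).restrictScalars R ∘ₗ ρ.toLinearMap +
      (LinearMap.lTensorHom M).restrictScalars R ∘ₗ σ.toLinearMap
  map_lie' {y z} := by
    refine TensorProduct.ext' fun m n ↦ ?_
    change ρ ⁅y, z⁆ m ⊗ₜ[K] n + m ⊗ₜ[K] σ ⁅y, z⁆ n =
      ρ y (ρ z m) ⊗ₜ[K] n + ρ y m ⊗ₜ[K] σ z n + (ρ z m ⊗ₜ[K] σ y n + m ⊗ₜ[K] σ y (σ z n)) -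
        (ρ z (ρ y m) ⊗ₜ[K] n + ρ z m ⊗ₜ[K] σ y n + (ρ y m ⊗ₜ[K] σ z n + m ⊗ₜ[K] σ z (σ y n)))
    simp only [LieHom.map_lie, LieRing.of_associative_ring_bracket, LinearMap.sub_apply,
      Module.End.mul_apply, TensorProduct.sub_tmul, TensorProduct.tmul_sub]
    abel

theorem tensorRep_apply_tmul (ρ : L →ₗ⁅R⁆ Module.End K M) (σ : L →ₗ⁅R⁆ Module.End K N) (y : L)
    (m : M) (n : N) : tensorRep ρ σ y (m ⊗ₜ n) = ρ y m ⊗ₜ n + m ⊗ₜ σ y n :=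
  rfl

end TensorRep

section EvalRep

variable {R A K L V : Type*} [CommRing R] [CommRing A] [Algebra R A] [CommRing K] [Algebra R K]
  [LieRing L] [LieAlgebra R L] [AddCommGroup V] [Module R V]

/-- The evaluation representation of the current algebra `A ⊗[R] L` at a `K`-point `φ` of `A`: the
pullback along `φ` of the base change to `K` of a representation of `L`. -/
def evalRep (φ : A →ₐ[R] K) (ρ : L →ₗ⁅R⁆ Module.End R V) :
    A ⊗[R] L →ₗ⁅R⁆ Module.End K (K ⊗[R] V) where
  toLinearMap :=
    (LieModule.toEnd K (K ⊗[R] Module.End R V) (K ⊗[R] V)).toLinearMap.restrictScalars R ∘ₗ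
      (LieAlgebra.ExtendScalars.map φ ρ).toLinearMap
  map_lie' {y z} := by simp

theorem evalRep_tmul (φ : A →ₐ[R] K) (ρ : L →ₗ⁅R⁆ Module.End R V) (p : A) (x : L) :
    evalRep φ ρ (p ⊗ₜ x) = φ p • (ρ x).baseChange K := by
  ext v
  change ⁅φ p ⊗ₜ[R] ρ x, (1 : K) ⊗ₜ[R] v⁆ = _
  simp [TensorProduct.smul_tmul']

end EvalRep

section JointEigenvalues

universe w uK

variable {R L X : Type*} {K : Type uK} [CommRing R] [Field K] [Algebra R K] [LieRing L]
  [LieAlgebra R L]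

variable (R K) in
/-- The systems of eigenvalues of a family `y` of elements of a Lie algebra on common eigenvectors
in representations on `K`-vector spaces; they form a submonoid because representations can be
tensored.  The spaces range over `Type (max w uK)`, so that they include the trivial
representation and are closed under tensor products. -/
def jointEigenvalues (y : X → L) : AddSubmonoid (X → K) where
  carrier := {χ | ∃ (M : Type max w uK) (_ : AddCommGroup M) (_ : Module K M) (_ : Module R M)
    (_ : IsScalarTower R K M) (ρ : L →ₗ⁅R⁆ Module.End K M) (v : M),
    v ≠ 0 ∧ ∀ i, ρ (y i) v = χ i • v}
  zero_mem' := ⟨ULift K, inferInstance, inferInstance, inferInstance, inferInstance, 0, 1,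
    one_ne_zero, fun i ↦ by simp⟩
  add_mem' := by
    rintro χ ψ ⟨M, _, _, _, _, ρ, v, hv, hρ⟩ ⟨N, _, _, _, _, σ, w, hw, hσ⟩
    refine ⟨M ⊗[K] N, inferInstance, inferInstance, inferInstance, inferInstance,
      tensorRep ρ σ, v ⊗ₜ w, tmul_ne_zero hv hw, fun i ↦ ?_⟩
    rw [tensorRep_apply_tmul, hρ, hσ, TensorProduct.tmul_smul, ← TensorProduct.smul_tmul',
      ← add_smul, Pi.add_apply]

open UniversalEnvelopingAlgebra in
theorem exists_ideal_ι_mem_iff {y : X → L} {χ : X → K} (hχ : χ ∈ jointEigenvalues.{w} R K y) :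
    ∃ I : Ideal (UniversalEnvelopingAlgebra R L), ∀ i, ι R (y i) ∈ I ↔ χ i = 0 := by
  obtain ⟨M, _, _, _, _, ρ, v, hv, hρ⟩ := hχ
  refine ⟨Ideal.comap (lift R ρ) (LinearMap.ker (LinearMap.toSpanSingleton (Module.End K M) M v)),
    fun i ↦ ?_⟩
  change lift R ρ (ι R (y i)) v = 0 ↔ χ i = 0
  rw [lift_ι_apply, hρ, smul_eq_zero_iff_left hv]

theorem mul_mem_jointEigenvalues {A : Type*} {V : Type w} [CommRing A] [Algebra R A]
    [AddCommGroup V] [Module R V] (φ : A →ₐ[R] K) (ρ : L →ₗ⁅R⁆ Module.End R V) {x : L} {μ : K}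
    (hμ : Module.End.HasEigenvalue ((ρ x).baseChange K) μ) :
    (fun p : A ↦ φ p * μ) ∈ jointEigenvalues.{w} R K (fun p : A ↦ p ⊗ₜ[R] x) := by
  obtain ⟨v, hv⟩ := hμ.exists_hasEigenvector
  refine ⟨K ⊗[R] V, inferInstance, inferInstance, inferInstance, inferInstance,
    evalRep φ ρ, v, hv.2, fun p ↦ ?_⟩
  rw [evalRep_tmul, LinearMap.smul_apply, hv.apply_eq_smul, smul_smul]

theorem exists_mem_jointEigenvalues_T {V : Type w} [AddCommGroup V] [Module R V]
    (ρ : L →ₗ⁅R⁆ Module.End R V) {x : L} {μ : K}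
    (hμ : Module.End.HasEigenvalue ((ρ x).baseChange K) μ) (n : ℕ) [NeZero n]
    [HasEnoughRootsOfUnity K n] :
    ∃ χ ∈ jointEigenvalues.{w} R K (fun p : LaurentPolynomial R ↦ p ⊗ₜ[R] x),
      ∀ d : ℕ, χ (LaurentPolynomial.T d) = if n ∣ d then n * μ else 0 := by
  obtain ⟨ζ, hζ⟩ := HasEnoughRootsOfUnity.exists_primitiveRoot K n
  lift ζ to Kˣ using hζ.isUnit (NeZero.ne n)
  refine ⟨∑ i ∈ Finset.range n, fun p ↦ laurentAeval R (ζ ^ i) p * μ,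
    sum_mem fun i _ ↦ mul_mem_jointEigenvalues _ ρ hμ, fun d ↦ ?_⟩
  simp_rw [Finset.sum_apply, laurentAeval_T, ← Finset.sum_mul, zpow_natCast,
    Units.val_pow_eq_pow_val, sum_range_pow_pow_of_isPrimitiveRoot hζ, ite_mul, zero_mul]

end JointEigenvalues

open UniversalEnvelopingAlgebra LaurentPolynomial in
theorem not_isNoetherianRing_enveloping_loopAlgebra {F L V : Type*} [Field F] [LieRing L]
    [LieAlgebra F L] [AddCommGroup V] [Module F V] [FiniteDimensional F V]
    (ρ : L →ₗ⁅F⁆ Module.End F V) {x : L} (hx : ¬ IsNilpotent (ρ x)) :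
    ¬ IsNoetherianRing (UniversalEnvelopingAlgebra F (loopAlgebra F L)) := by
  let K := AlgebraicClosure F
  have hxK : ¬ IsNilpotent ((ρ x).baseChange K) :=
    (IsNilpotent.map_iff (f := Module.End.baseChangeHom F K V)
      (LinearMap.baseChangeHom_injective F V K)).not.mpr hx
  obtain ⟨μ, hμ0, hμ⟩ := exists_hasEigenvalue_ne_zero_of_not_isNilpotent hxK
  obtain ⟨c, hc, hcK⟩ := exists_one_lt_natCast_ne_zero K
  refine not_isNoetherian_of_forall_exists_submodule
    (fun j ↦ ι F ((T (c ^ j : ℕ) : LaurentPolynomial F) ⊗ₜ[F] x)) fun n ↦ ?_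
  have : NeZero ((c ^ n : ℕ) : K) := ⟨by simpa using pow_ne_zero n hcK⟩
  have : NeZero (c ^ n) := .of_neZero_natCast K
  obtain ⟨χ, hχ, hχT⟩ := exists_mem_jointEigenvalues_T ρ hμ (c ^ n)
  obtain ⟨I, hI⟩ := exists_ideal_ι_mem_iff hχ
  refine ⟨I, fun j hj ↦ ?_, ?_⟩
  · rw [hI, hχT, if_neg ((Nat.pow_dvd_pow_iff_le_right hc).not.mpr hj.not_ge)]
  · rw [hI, hχT, if_pos dvd_rfl]
    exact mul_ne_zero (NeZero.ne _) hμ0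

theorem exists_lieCharacter_apply_ne_zero (F L : Type*) [Field F] [LieRing L] [LieAlgebra F L]
    [LieAlgebra.IsSolvable L] [Nontrivial L] : ∃ χ : LieAlgebra.LieCharacter F L, ∃ x, χ x ≠ 0 := by
  obtain ⟨f, hf, hker⟩ := Submodule.exists_le_ker_of_lt_top
    (LieAlgebra.derivedSeries F L 1).toSubmodule (LieAlgebra.derivedSeries_lt_top_of_solvable F L)
  refine ⟨{ toLinearMap := f, map_lie' := fun {x y} ↦ ?_ }, DFunLike.ne_iff.mp hf⟩
  have hxy : ⁅x, y⁆ ∈ LieAlgebra.derivedSeries F L 1 :=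
    LieSubmodule.lie_mem_lie (LieSubmodule.mem_top x) (LieSubmodule.mem_top y)
  simpa [LieRing.of_associative_ring_bracket, mul_comm] using hker hxy

theorem exists_rep_not_isNilpotent (F L : Type*) [Field F] [LieRing L] [LieAlgebra F L]
    [FiniteDimensional F L] [Nontrivial L] :
    ∃ (ρ : L →ₗ⁅F⁆ Module.End F L) (x : L), ¬ IsNilpotent (ρ x) := by
  by_cases hL : LieRing.IsNilpotent L
  · obtain ⟨χ, x, hx⟩ := exists_lieCharacter_apply_ne_zero F L
    refine ⟨(Algebra.ofId F (Module.End F L)).toLieHom.comp χ, x, ?_⟩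
    rwa [ne_eq, ← isNilpotent_iff_eq_zero,
      ← IsNilpotent.map_iff (FaithfulSMul.algebraMap_injective F (Module.End F L))] at hx
  · contrapose! hL
    exact LieAlgebra.isNilpotent_iff_forall.mpr (hL (LieAlgebra.ad F L))

end AssociativeLieRing

theorem enveloping_loopAlgebra_not_noetherian_general (F L : Type*) [Field F] [LieRing L]
    [LieAlgebra F L] [FiniteDimensional F L] [Nontrivial L] :
    ¬ IsNoetherianRing (UniversalEnvelopingAlgebra F (loopAlgebra F L)) ∧
      ¬ IsNoetherianRing (UniversalEnvelopingAlgebra F (loopAlgebra F L))ᵐᵒᵖ := by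
  obtain ⟨ρ, x, hx⟩ := exists_rep_not_isNilpotent F L
  have hU := not_isNoetherianRing_enveloping_loopAlgebra ρ hx
  exact ⟨hU, fun _ ↦ hU (isNoetherianRing_of_ringEquiv _
    (envelopingOpEquiv F (loopAlgebra F L)).symm.toRingEquiv)⟩

theorem enveloping_loopAlgebra_not_noetherian
    [FiniteDimensional k 𝔤] [LieAlgebra.IsSimple k 𝔤] :
    ¬ IsNoetherianRing (UniversalEnvelopingAlgebra k (loopAlgebra k 𝔤)) ∧
      ¬ IsNoetherianRing (UniversalEnvelopingAlgebra k (loopAlgebra k 𝔤))ᵐᵒᵖ := by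
  have := LieAlgebra.IsSimple.nontrivial k 𝔤
  exact enveloping_loopAlgebra_not_noetherian_general k 𝔤

end
end

section
/- Let m ≥ 1 and fix j with 1 ≤ j ≤ m. In the Lie algebra of k-linear derivations of k[x₁, …, x_{2m+1}], the derivations E_r = r·x_j^{r−1} ∂/∂x_{j+m} − (r−2)·x_j^r ∂/∂x_{2m+1}, for integers r ≥ 2, pairwise commute ([E_r, E_s] = 0 for all r, s ≥ 2) and are linearly independent over k; hence their span is an infinite dimensional abelian Lie subalgebra. -/
/-!
Statement 18: Let m ≥ 1 and fix j with 1 ≤ j ≤ m.  In the Lie algebra of k-linear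
derivations of k[x₁, …, x_{2m+1}], the derivations
E_r = r·x_j^{r−1} ∂/∂x_{j+m} − (r−2)·x_j^r ∂/∂x_{2m+1} (for integers r ≥ 2)
pairwise commute and are linearly independent over k; hence their span is an infinite
dimensional abelian Lie subalgebra.

Variables are indexed by `Fin (2*m+1)`, with `xᵢ` corresponding to the index `i − 1`.
-/

noncomputable section

open MvPolynomial

variable (k : Type*) [Field k]

/-- The index (in `Fin (2*m+1)`) of the variable `x_j`. -/
def idxJ (m j : ℕ) (h1 : 1 ≤ j) (hj : j ≤ m) : Fin (2 * m + 1) := ⟨j - 1, by omega⟩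

/-- The index (in `Fin (2*m+1)`) of the variable `x_{j+m}`. -/
def idxJM (m j : ℕ) (h1 : 1 ≤ j) (hj : j ≤ m) : Fin (2 * m + 1) := ⟨j + m - 1, by omega⟩

/-- The index (in `Fin (2*m+1)`) of the variable `x_{2m+1}`. -/
def idxLast (m : ℕ) : Fin (2 * m + 1) := ⟨2 * m, by omega⟩

/-- The derivation `E_r = r·x_j^{r−1} ∂/∂x_{j+m} − (r−2)·x_j^r ∂/∂x_{2m+1}`
of `k[x₁, …, x_{2m+1}]`. -/
def Econtact (m j : ℕ) (h1 : 1 ≤ j) (hj : j ≤ m) (r : ℕ) :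
    Derivation k (MvPolynomial (Fin (2 * m + 1)) k) (MvPolynomial (Fin (2 * m + 1)) k) :=
  MvPolynomial.mkDerivation k fun i =>
    if i = idxJM m j h1 hj then
      (r : MvPolynomial (Fin (2 * m + 1)) k) * X (idxJ m j h1 hj) ^ (r - 1)
    else if i = idxLast m then
      -((r : MvPolynomial (Fin (2 * m + 1)) k) - 2) * X (idxJ m j h1 hj) ^ r
    else 0

/-!
The 1-form `dx_{2m+1} + x_j dx_{j+m}` takes the value `r x_j^r - (r - 2) x_j^r = 2 x_j^r` on `E_r`,
and the powers of `x_j` are linearly independent, so the `E_r` are independent once `2` is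
invertible. They commute because their coefficients are polynomials in `x_j`, which they all kill.
-/

theorem linearIndependent_pow_of_transcendental {R A : Type*} [CommRing R] [Ring A] [Algebra R A]
    {x : A} (hx : Transcendental R x) : LinearIndependent R fun n : ℕ => x ^ n := by
  have hmap := (Polynomial.basisMonomials R).linearIndependent.map_injOn
    (Polynomial.aeval x).toLinearMap (transcendental_iff_injective.1 hx).injOn
  simpa [Function.comp_def] using hmap

theorem not_finite_of_linearIndependent_of_forall_mem {R M ι : Type*} [Semiring R]
    [StrongRankCondition R] [AddCommMonoid M] [Module R M] [Infinite ι] {v : ι → M}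
    (hv : LinearIndependent R v) {N : Submodule R M} (hN : ∀ i, v i ∈ N) :
    ¬ Module.Finite R N := by
  intro _
  have hvN : LinearIndependent R fun i => (⟨v i, hN i⟩ : N) := .of_comp N.subtype hv
  exact hvN.finite.false

section Derivation

variable {R σ : Type*} [CommRing R]

theorem derivation_lie_eq_zero_of_mem_supported {s : Set σ}
    {D₁ D₂ : Derivation R (MvPolynomial σ R) (MvPolynomial σ R)}
    (h₁ : ∀ i ∈ s, D₁ (X i) = 0) (h₂ : ∀ i ∈ s, D₂ (X i) = 0)
    (hs₁ : ∀ i, D₁ (X i) ∈ supported R s) (hs₂ : ∀ i, D₂ (X i) ∈ supported R s) :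
    ⁅D₁, D₂⁆ = 0 := by
  refine derivation_ext fun i => ?_
  have h₁₂ : D₁ (D₂ (X i)) = 0 := derivation_eqOn_supported (D₂ := 0) h₁ (hs₂ i)
  have h₂₁ : D₂ (D₁ (X i)) = 0 := derivation_eqOn_supported (D₂ := 0) h₂ (hs₁ i)
  rw [Derivation.commutator_apply, h₁₂, h₂₁, sub_zero, Derivation.zero_apply]

/-- The pairing of derivations with the 1-form `dx_c + x_a dx_b`, which detects the linear
independence of the `E_r`. -/
@[simps]
def contactPairing (a b c : σ) :
    Derivation R (MvPolynomial σ R) (MvPolynomial σ R) →ₗ[R] MvPolynomial σ R where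
  toFun D := D (X c) + X a * D (X b)
  map_add' D₁ D₂ := by simp only [Derivation.add_apply]; ring
  map_smul' r D := by
    simp only [Derivation.smul_apply, mul_smul_comm, smul_add, RingHom.id_apply]

end Derivation

section Econtact

variable {m j : ℕ} (h1 : 1 ≤ j) (hj : j ≤ m)

theorem idxJ_ne_idxJM : idxJ m j h1 hj ≠ idxJM m j h1 hj := by
  simp only [idxJ, idxJM, ne_eq, Fin.mk.injEq]
  lia

theorem idxJ_ne_idxLast : idxJ m j h1 hj ≠ idxLast m := by
  simp only [idxJ, idxLast, ne_eq, Fin.mk.injEq]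
  lia

theorem idxLast_ne_idxJM : idxLast m ≠ idxJM m j h1 hj := by
  simp only [idxJM, idxLast, ne_eq, Fin.mk.injEq]
  lia

theorem econtact_X_idxJ (r : ℕ) : Econtact k m j h1 hj r (X (idxJ m j h1 hj)) = 0 := by
  rw [Econtact, mkDerivation_X, if_neg (idxJ_ne_idxJM h1 hj), if_neg (idxJ_ne_idxLast h1 hj)]

theorem econtact_X_idxJM (r : ℕ) :
    Econtact k m j h1 hj r (X (idxJM m j h1 hj)) =
      (r : MvPolynomial (Fin (2 * m + 1)) k) * X (idxJ m j h1 hj) ^ (r - 1) := by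
  rw [Econtact, mkDerivation_X, if_pos rfl]

theorem econtact_X_idxLast (r : ℕ) :
    Econtact k m j h1 hj r (X (idxLast m)) =
      -((r : MvPolynomial (Fin (2 * m + 1)) k) - 2) * X (idxJ m j h1 hj) ^ r := by
  rw [Econtact, mkDerivation_X, if_neg (idxLast_ne_idxJM h1 hj), if_pos rfl]

theorem econtact_X_mem_supported (r : ℕ) (i : Fin (2 * m + 1)) :
    Econtact k m j h1 hj r (X i) ∈ supported k {idxJ m j h1 hj} := by
  have hX : X (idxJ m j h1 hj) ∈ supported k {idxJ m j h1 hj} :=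
    Algebra.subset_adjoin (Set.mem_image_of_mem X rfl)
  rw [Econtact, mkDerivation_X]
  split_ifs
  · exact mul_mem (natCast_mem _ r) (pow_mem hX _)
  · exact mul_mem (neg_mem (sub_mem (natCast_mem _ r) (ofNat_mem _ 2))) (pow_mem hX _)
  · exact zero_mem _

theorem lie_econtact_econtact (r s : ℕ) :
    ⁅Econtact k m j h1 hj r, Econtact k m j h1 hj s⁆ = 0 :=
  have hker (t : ℕ) : ∀ i ∈ ({idxJ m j h1 hj} : Set _), Econtact k m j h1 hj t (X i) = 0 :=
    fun _ hi => hi ▸ econtact_X_idxJ k h1 hj t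
  derivation_lie_eq_zero_of_mem_supported (hker r) (hker s)
    (econtact_X_mem_supported k h1 hj r) (econtact_X_mem_supported k h1 hj s)

theorem contactPairing_econtact (r : ℕ) :
    contactPairing (idxJ m j h1 hj) (idxJM m j h1 hj) (idxLast m) (Econtact k m j h1 hj r) =
      (2 : k) • X (idxJ m j h1 hj) ^ r := by
  rw [contactPairing_apply, econtact_X_idxLast, econtact_X_idxJM, ofNat_smul_eq_nsmul, nsmul_eq_mul]
  -- The truncated exponent `r - 1` is harmless at `r = 0`, where its coefficient vanishes.
  cases r with
  | zero => simp
  | succ n => rw [Nat.add_sub_cancel]; push_cast; ring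

theorem linearIndependent_econtact (h2 : (2 : k) ≠ 0) :
    LinearIndependent k (Econtact k m j h1 hj) := by
  refine .of_comp (contactPairing (idxJ m j h1 hj) (idxJM m j h1 hj) (idxLast m)) ?_
  have hpow : LinearIndependent k fun r : ℕ => X (R := k) (idxJ m j h1 hj) ^ r :=
    linearIndependent_pow_of_transcendental (transcendental_X k _)
  convert hpow.units_smul fun _ => Units.mk0 2 h2 using 1
  exact funext (contactPairing_econtact k h1 hj)

end Econtact

theorem contact_abelian_family_general (h2 : (2 : k) ≠ 0) (m j : ℕ) (h1 : 1 ≤ j) (hj : j ≤ m)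
    {A : Set ℕ} (hA : A.Infinite) :
    (∀ r s : ℕ, ⁅Econtact k m j h1 hj r, Econtact k m j h1 hj s⁆ = 0) ∧
      LinearIndependent k (Econtact k m j h1 hj) ∧
      ∃ S : LieSubalgebra k
          (Derivation k (MvPolynomial (Fin (2 * m + 1)) k) (MvPolynomial (Fin (2 * m + 1)) k)),
        (S : Set (Derivation k (MvPolynomial (Fin (2 * m + 1)) k)
            (MvPolynomial (Fin (2 * m + 1)) k))) =
            (Submodule.span k {D | ∃ r ∈ A, D = Econtact k m j h1 hj r} : Set _) ∧
          IsLieAbelian S ∧ ¬ Module.Finite k S := by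
  have hlin := linearIndependent_econtact k h1 hj h2
  have hcomm : ∀ᵉ (D ∈ {D | ∃ r ∈ A, D = Econtact k m j h1 hj r})
      (D' ∈ {D | ∃ r ∈ A, D = Econtact k m j h1 hj r}), ⁅D, D'⁆ = 0 := by
    rintro _ ⟨r, _, rfl⟩ _ ⟨s, _, rfl⟩
    exact lie_econtact_econtact k h1 hj r s
  have : Infinite A := hA.to_subtype
  refine ⟨lie_econtact_econtact k h1 hj, hlin, LieSubalgebra.lieSpan k _ _,
    congrArg SetLike.coe (LieSubalgebra.coe_lieSpan_eq_span_of_forall_lie_eq_zero hcomm),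
    LieSubalgebra.isLieAbelian_lieSpan_iff.2 hcomm, ?_⟩
  exact not_finite_of_linearIndependent_of_forall_mem (hlin.comp _ Subtype.val_injective)
    fun r : A => LieSubalgebra.subset_lieSpan ⟨r, r.2, rfl⟩

theorem contact_abelian_family [CharZero k] (m j : ℕ) (h1 : 1 ≤ j) (hj : j ≤ m) :
    (∀ r s : ℕ, 2 ≤ r → 2 ≤ s →
        ⁅Econtact k m j h1 hj r, Econtact k m j h1 hj s⁆ = 0) ∧
      LinearIndependent k (fun r : {r : ℕ // 2 ≤ r} => Econtact k m j h1 hj r.1) ∧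
      ∃ S : LieSubalgebra k
          (Derivation k (MvPolynomial (Fin (2 * m + 1)) k) (MvPolynomial (Fin (2 * m + 1)) k)),
        (S : Set (Derivation k (MvPolynomial (Fin (2 * m + 1)) k)
            (MvPolynomial (Fin (2 * m + 1)) k))) =
            (Submodule.span k {D | ∃ r : ℕ, 2 ≤ r ∧ D = Econtact k m j h1 hj r} : Set _) ∧
          IsLieAbelian S ∧ ¬ Module.Finite k S := by
  obtain ⟨hcomm, hlin, hspan⟩ :=
    contact_abelian_family_general k two_ne_zero m j h1 hj (Set.Ici_infinite 2)
  exact ⟨fun r s _ _ => hcomm r s, hlin.comp _ Subtype.val_injective, hspan⟩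

end
end
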